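/- Optimal prior for a given policy (Lemma 1): Let p be a distribution on S, let π be a policy, and let m be the marginal of π under p. Then for every distribution q on A such that q(a) > 0 whenever m(a) > 0, one has ∑_{s : p(s)>0} p(s) B_{q,π}V(s) ≤ ∑_{s : p(s)>0} p(s) B_{m,π}V(s); that is, among all priors, the marginal of π under p maximizes the expected evaluation operator ∑_{s : p(s)>0} p(s) B_{prior,π}V(s). -/

import Mathlib

open Finset

/-- A probability distribution on a finite type: nonnegative and sums to one. -/
def IsDist {X : Type*} [Fintype X] (d : X → ℝ) : Prop :=
  (∀ x, 0 ≤ d x) ∧ ∑ x, d x = 1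

/-- Kullback–Leibler divergence: sum over points where `μ` is positive. -/
noncomputable def KL {X : Type*} [Fintype X] (μ ν : X → ℝ) : ℝ :=
  ∑ x, if 0 < μ x then μ x * Real.log (μ x / ν x) else 0

/-- Marginal action distribution of policy `π` under state distribution `p`. -/
noncomputable def margPol {S A : Type*} [Fintype S] [Fintype A]
    (p : S → ℝ) (π : S → A → ℝ) (a : A) : ℝ :=
  ∑ s, p s * π s a

/-- Evaluation operator `B_{q,π} V (s)` (with `F s a = R s a + γ 𝔼[V]` precomputed). -/
noncomputable def Beval {S A : Type*} [Fintype S] [Fintype A]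
    (F : S → A → ℝ) (β : ℝ) (q : A → ℝ) (π : S → A → ℝ) (s : S) : ℝ :=
  ∑ a, if 0 < π s a then π s a * (F s a - (1 / β) * Real.log (π s a / q a)) else 0

/-- Mutual-information-regularized objective `J(π)`. -/
noncomputable def Jobj {S A : Type*} [Fintype S] [Fintype A]
    (p : S → ℝ) (F : S → A → ℝ) (β : ℝ) (π : S → A → ℝ) : ℝ :=
  ∑ s, if 0 < p s then
    p s * ∑ a, (if 0 < π s a then
      π s a * (F s a - (1 / β) * Real.log (π s a / margPol p π a)) else 0)
  else 0

/-- Blahut–Arimoto policy iterates. -/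
noncomputable def BApol {S A : Type*} [Fintype S] [Fintype A]
    (p : S → ℝ) (F : S → A → ℝ) (β : ℝ) (π0 : S → A → ℝ) : ℕ → S → A → ℝ
  | 0 => π0
  | m + 1 => fun s a =>
      ((∑ s', p s' * BApol p F β π0 m s' a) * Real.exp (β * F s a)) /
        ∑ a', (∑ s', p s' * BApol p F β π0 m s' a') * Real.exp (β * F s a')

/-- Blahut–Arimoto prior iterates: the marginal of the `m`-th policy under `p`. -/
noncomputable def BAprior {S A : Type*} [Fintype S] [Fintype A]
    (p : S → ℝ) (F : S → A → ℝ) (β : ℝ) (π0 : S → A → ℝ) (m : ℕ) (a : A) : ℝ :=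
  ∑ s, p s * BApol p F β π0 m s a

/-!
Replacing the prior `q` by the marginal `m` lowers the penalty `log (π(a|s) / q(a))` by
`log (m(a) / q(a))`, which does not depend on the state. Averaging over states and actions
therefore weights this gain by `m(a)`, so the total improvement is exactly `(1/β) KL(m ‖ q)`,
which is nonnegative by Gibbs' inequality.
-/

theorem ite_pos_mul_eq_mul {α : Type*} [MulZeroClass α] [PartialOrder α] {c : α}
    [Decidable (0 < c)] (hc : 0 ≤ c) (x : α) : (if 0 < c then c * x else 0) = c * x := by
  split_ifs with h
  · rfl
  · rw [← hc.eq_of_not_lt h, zero_mul]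

section Divergence

variable {X : Type*} [Fintype X] {μ ν : X → ℝ}

theorem KL_eq_sum_mul_log (hμ : ∀ x, 0 ≤ μ x) :
    KL μ ν = ∑ x, μ x * Real.log (μ x / ν x) :=
  sum_congr rfl fun x _ => ite_pos_mul_eq_mul (hμ x) _

theorem sub_le_mul_log_div {x y : ℝ} (hx : 0 ≤ x) (hy : 0 < y) :
    x - y ≤ x * Real.log (x / y) := by
  have hkl : 0 ≤ y * InformationTheory.klFun (x / y) :=
    mul_nonneg hy.le (InformationTheory.klFun_nonneg (by positivity))
  have hscale : y * InformationTheory.klFun (x / y) = x * Real.log (x / y) - (x - y) := by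
    rw [InformationTheory.klFun]
    field_simp
    ring
  linarith

theorem sum_sub_sum_le_KL (hν : ∀ x, 0 ≤ ν x) (hμν : ∀ x, 0 < μ x → 0 < ν x) :
    ∑ x, μ x - ∑ x, ν x ≤ KL μ ν := by
  rw [KL, ← sum_sub_distrib]
  refine sum_le_sum fun x _ => ?_
  split_ifs with hx
  · exact sub_le_mul_log_div hx.le (hμν x hx)
  · linarith [hν x]

theorem IsDist.KL_nonneg (hμ : IsDist μ) (hν : IsDist ν) (hμν : ∀ x, 0 < μ x → 0 < ν x) :
    0 ≤ KL μ ν := by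
  simpa [hμ.2, hν.2] using sum_sub_sum_le_KL hν.1 hμν

end Divergence

section Policy

variable {S A : Type*} [Fintype S] [Fintype A] {p : S → ℝ} {π : S → A → ℝ}

theorem sum_margPol_mul (p : S → ℝ) (π : S → A → ℝ) (f : A → ℝ) :
    ∑ a, margPol p π a * f a = ∑ s, p s * ∑ a, π s a * f a := by
  simp only [margPol, sum_mul, mul_sum, mul_assoc]
  exact sum_comm

theorem margPol_nonneg (hp : ∀ s, 0 ≤ p s) (hπ : ∀ s a, 0 ≤ π s a) (a : A) :
    0 ≤ margPol p π a :=
  sum_nonneg fun s _ => mul_nonneg (hp s) (hπ s a)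

theorem margPol_pos (hp : ∀ s, 0 ≤ p s) (hπ : ∀ s a, 0 ≤ π s a) {s : S} {a : A}
    (hs : 0 < p s) (ha : 0 < π s a) : 0 < margPol p π a :=
  sum_pos' (fun s _ => mul_nonneg (hp s) (hπ s a)) ⟨s, mem_univ s, mul_pos hs ha⟩

theorem IsDist.margPol (hp : IsDist p) (hπ : ∀ s, IsDist (π s)) : IsDist (margPol p π) := by
  refine ⟨margPol_nonneg hp.1 fun s => (hπ s).1, ?_⟩
  simpa [(hπ _).2, hp.2] using sum_margPol_mul p π 1

theorem Beval_eq_sum_mul (F : S → A → ℝ) (β : ℝ) (q : A → ℝ) {s : S} (hπ : ∀ a, 0 ≤ π s a) :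
    Beval F β q π s = ∑ a, π s a * (F s a - (1 / β) * Real.log (π s a / q a)) :=
  sum_congr rfl fun a _ => ite_pos_mul_eq_mul (hπ a) _

theorem Beval_sub_Beval (F : S → A → ℝ) (β : ℝ) {q r : A → ℝ} {s : S} (hπ : ∀ a, 0 ≤ π s a)
    (hq : ∀ a, 0 < π s a → q a ≠ 0) (hr : ∀ a, 0 < π s a → r a ≠ 0) :
    Beval F β r π s - Beval F β q π s = (1 / β) * ∑ a, π s a * Real.log (r a / q a) := by
  rw [Beval_eq_sum_mul F β r hπ, Beval_eq_sum_mul F β q hπ, ← sum_sub_distrib, mul_sum]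
  refine sum_congr rfl fun a _ => ?_
  rcases (hπ a).eq_or_lt with ha | ha
  · simp [← ha]
  · rw [Real.log_div ha.ne' (hr a ha), Real.log_div ha.ne' (hq a ha),
      Real.log_div (hr a ha) (hq a ha)]
    ring

theorem sum_mul_Beval_margPol (F : S → A → ℝ) (β : ℝ) {q : A → ℝ} (hp : ∀ s, 0 ≤ p s)
    (hπ : ∀ s a, 0 ≤ π s a) (hq : ∀ a, 0 < margPol p π a → q a ≠ 0) :
    ∑ s, p s * Beval F β (margPol p π) π s =
      ∑ s, p s * Beval F β q π s + (1 / β) * KL (margPol p π) q := by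
  have gain (s : S) : p s * (Beval F β (margPol p π) π s - Beval F β q π s) =
      (1 / β) * (p s * ∑ a, π s a * Real.log (margPol p π a / q a)) := by
    rcases (hp s).eq_or_lt with hs | hs
    · simp [← hs]
    · have hm (a : A) (ha : 0 < π s a) : 0 < margPol p π a := margPol_pos hp hπ hs ha
      rw [Beval_sub_Beval F β (hπ s) (fun a ha => hq a (hm a ha)) fun a ha => (hm a ha).ne']
      ring
  rw [← sub_eq_iff_eq_add', ← sum_sub_distrib]
  calc ∑ s, (p s * Beval F β (margPol p π) π s - p s * Beval F β q π s)
      = (1 / β) * ∑ s, p s * ∑ a, π s a * Real.log (margPol p π a / q a) := by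
        simp only [← mul_sub, gain, mul_sum]
    _ = (1 / β) * KL (margPol p π) q := by
        rw [KL_eq_sum_mul_log (margPol_nonneg hp hπ), sum_margPol_mul]

end Policy

/-- Optimal prior for a given policy (Lemma 1). -/
theorem optimal_prior_for_given_policy
    {S A : Type*} [Fintype S] [Fintype A] [Nonempty S] [Nonempty A]
    (p : S → ℝ) (hp : IsDist p)
    (R : S → A → ℝ) (P : S → A → S → ℝ) (hP : ∀ s a, IsDist (P s a))
    (V : S → ℝ) (β : ℝ) (hβ : 0 < β) (γ : ℝ) (hγ : 0 < γ ∧ γ < 1)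
    (F : S → A → ℝ) (hF : ∀ s a, F s a = R s a + γ * ∑ s', P s a s' * V s')
    (π : S → A → ℝ) (hπ : ∀ s, IsDist (π s))
    (q : A → ℝ) (hq : IsDist q)
    (hqpos : ∀ a, 0 < margPol p π a → 0 < q a) :
    ∑ s, (if 0 < p s then p s * Beval F β q π s else 0)
      ≤ ∑ s, (if 0 < p s then p s * Beval F β (margPol p π) π s else 0) := by
  have hKL : 0 ≤ KL (margPol p π) q := (hp.margPol hπ).KL_nonneg hq hqpos
  simp only [ite_pos_mul_eq_mul (hp.1 _)]
  rw [sum_mul_Beval_margPol F β hp.1 (fun s => (hπ s).1) fun a ha => (hqpos a ha).ne']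
  exact le_add_of_nonneg_right (by positivity)
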